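/- The merge rule is eliminable in the presence of switch: for all LBV structures P, Q and R with R ∈ Merge(P,Q), there exists a rewriting path [P,Q] →* R that uses only the switch rewrite rule (rewriting C[(P',Q'),R'] to C(P',[Q',R'])), applied in arbitrary contexts and modulo the structural equivalence; in particular the merge rewrite rule g (rewriting [P,Q] to any R ∈ Merge(P,Q)) never needs to be used. -/

import Mathlib

/-!
Why merging reduces to switch.  With a unit in one argument, switch gives
`[P,Q] = [(P,◦),Q] → (P,[◦,Q]) = (P,Q)` (`Deriv.mix`), so both base elements of
`Merge(P,Q)` are reachable from `[P,Q]`.  The recursive clauses follow by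
induction on the generation of `R`: `[[S,T],Q] = [S,[T,Q]]` by associativity and
`[(S,T),Q] → (S,[T,Q])` by one switch step, after which the path
`[T,Q] →* X` given by the induction hypothesis is replayed inside the context
(`Deriv.ctx`).  Commutativity covers the mirrored clauses.
-/

/-!
The deep-inference system LBV (the `BV`-free core system of the calculus of
structures of Guglielmi).  Structures are built from the unit `◦`, atoms `a`
and negated atoms `ā` by par `[P,Q]` and copar `(P,Q)`, and are identified
modulo the congruence generated by associativity, commutativity and the
unit laws `[P,◦]=P`, `(P,◦)=P`.  The rules `ai↓`, `s` (and the atomic cut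
`ai↑`) apply inside an arbitrary one-hole context and modulo the
equivalence.
-/

namespace LBV

/-- Structures: the unit `◦`, atoms, negated atoms, par `[P,Q]` and
copar `(P,Q)`. -/
inductive St : Type where
  | unit : St
  | pos  : ℕ → St
  | neg  : ℕ → St
  | par  : St → St → St
  | cop  : St → St → St
deriving DecidableEq

/-- Negation: `¬◦ = ◦`, `¬[P,Q] = (¬P,¬Q)`, `¬(P,Q) = [¬P,¬Q]`, `¬¬P = P`. -/
def St.negS : St → St
  | .unit => .unit
  | .pos a => .neg a
  | .neg a => .pos a
  | .par P Q => .cop P.negS Q.negS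
  | .cop P Q => .par P.negS Q.negS

/-- Atoms are the propositional symbols and their negations. -/
def St.isAtom : St → Prop
  | .pos _ => True
  | .neg _ => True
  | _ => False

/-- Syntactic equivalence of structures: the smallest congruence generated
by associativity and commutativity of par and copar and the unit laws
`[P,◦]=P` and `(P,◦)=P`. -/
inductive Equiv : St → St → Prop where
  | refl (P : St) : Equiv P P
  | symm {P Q : St} : Equiv P Q → Equiv Q P
  | trans {P Q R : St} : Equiv P Q → Equiv Q R → Equiv P R
  | parComm (P Q : St) : Equiv (.par P Q) (.par Q P)
  | copComm (P Q : St) : Equiv (.cop P Q) (.cop Q P)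
  | parAssoc (P Q R : St) : Equiv (.par (.par P Q) R) (.par P (.par Q R))
  | copAssoc (P Q R : St) : Equiv (.cop (.cop P Q) R) (.cop P (.cop Q R))
  | parUnit (P : St) : Equiv (.par P .unit) P
  | copUnit (P : St) : Equiv (.cop P .unit) P
  | parCongr {P P' Q Q' : St} :
      Equiv P P' → Equiv Q Q' → Equiv (.par P Q) (.par P' Q')
  | copCongr {P P' Q Q' : St} :
      Equiv P P' → Equiv Q Q' → Equiv (.cop P Q) (.cop P' Q')

/-- One-hole contexts. -/
inductive Ctx : Type where
  | hole : Ctx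
  | parL : Ctx → St → Ctx
  | parR : St → Ctx → Ctx
  | copL : Ctx → St → Ctx
  | copR : St → Ctx → Ctx

/-- Plugging a structure into the hole of a context. -/
def Ctx.fill : Ctx → St → St
  | .hole, P => P
  | .parL C Q, P => .par (C.fill P) Q
  | .parR Q C, P => .par Q (C.fill P)
  | .copL C Q, P => .cop (C.fill P) Q
  | .copR Q C, P => .cop Q (C.fill P)

/-- Names of the rules: interaction `ai↓`, co-interaction (atomic cut)
`ai↑`, and switch `s`. -/
inductive Rule : Type where
  | aiDown | aiUp | s
deriving DecidableEq

/-- The rules read at the root of a structure (premise on the left,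
conclusion on the right). -/
inductive RootStep : Rule → St → St → Prop where
  | aiDown (A : St) (h : A.isAtom) : RootStep .aiDown .unit (.par A A.negS)
  | aiUp (A : St) (h : A.isAtom) : RootStep .aiUp (.cop A A.negS) .unit
  | s (P Q R : St) : RootStep .s (.cop P (.par Q R)) (.par (.cop P Q) R)

/-- One inference step using a rule from the set `Rs`, applied inside an
arbitrary context and modulo the equivalence. -/
def Step (Rs : Set Rule) (P Q : St) : Prop :=
  ∃ r ∈ Rs, ∃ (C : Ctx) (P' Q' : St),
    RootStep r P' Q' ∧ Equiv P (C.fill P') ∧ Equiv (C.fill Q') Q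

/-- Derivations over an arbitrary step relation: a finite sequence of rule
instances from the premise to the conclusion (modulo the equivalence). -/
inductive Deriv (Stp : St → St → Prop) : St → St → Prop where
  | eqv {P Q : St} : Equiv P Q → Deriv Stp P Q
  | step {P Q R : St} : Stp P Q → Deriv Stp Q R → Deriv Stp P R

/-- The rules of the system LBV. -/
def LBVRules : Set Rule := {.aiDown, .s}

/-- Derivations in LBV. -/
def DerivLBV (P Q : St) : Prop := Deriv (Step LBVRules) P Q

/-- A proof of `Q` in LBV is a derivation from the unit `◦` to `Q`. -/
def ProofLBV (Q : St) : Prop := DerivLBV .unit Q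

end LBV

namespace LBV

mutual
  /-- `MergeRel P Q R` means `R ∈ Merge(P,Q)`, where
  `Merge(P,Q) = {[P,Q], (P,Q)} ∪ M(P,Q) ∪ M(Q,P)`. -/
  inductive MergeRel : St → St → St → Prop where
    | par (P Q : St) : MergeRel P Q (.par P Q)
    | cop (P Q : St) : MergeRel P Q (.cop P Q)
    | left {P Q R : St} : MRel P Q R → MergeRel P Q R
    | right {P Q R : St} : MRel Q P R → MergeRel P Q R

  /-- `MRel P Q R` means `R ∈ M(P,Q)`, where `M(◦,Q) = M(a,Q) = ∅`,
  `M([S,T],Q) = {[S,X] : X ∈ Merge(T,Q)} ∪ {[X,T] : X ∈ Merge(S,Q)}` and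
  `M((S,T),Q) = {(S,X) : X ∈ Merge(T,Q)} ∪ {(X,T) : X ∈ Merge(S,Q)}`. -/
  inductive MRel : St → St → St → Prop where
    | parL {S T Q X : St} : MergeRel T Q X → MRel (.par S T) Q (.par S X)
    | parR {S T Q X : St} : MergeRel S Q X → MRel (.par S T) Q (.par X T)
    | copL {S T Q X : St} : MergeRel T Q X → MRel (.cop S T) Q (.cop S X)
    | copR {S T Q X : St} : MergeRel S Q X → MRel (.cop S T) Q (.cop X T)
end

/-- The switch rule read bottom-up as a rewrite rule: it rewrites
`C[(P,Q),R]` to `C(P,[Q,R])`, in an arbitrary context and modulo the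
structural equivalence. -/
def SwitchRw (A B : St) : Prop :=
  ∃ (C : Ctx) (P Q R : St),
    Equiv A (C.fill (.par (.cop P Q) R)) ∧ Equiv (C.fill (.cop P (.par Q R))) B

theorem Equiv.ctx (C : Ctx) {A B : St} (h : Equiv A B) :
    Equiv (C.fill A) (C.fill B) := by
  induction C with
  | hole => exact h
  | parL C S ih => exact .parCongr ih (.refl S)
  | parR S C ih => exact .parCongr (.refl S) ih
  | copL C S ih => exact .copCongr ih (.refl S)
  | copR S C ih => exact .copCongr (.refl S) ih

/-- Composition of one-hole contexts: `D` is plugged into the hole of `C`. -/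
def Ctx.comp : Ctx → Ctx → Ctx
  | .hole, D => D
  | .parL C S, D => .parL (C.comp D) S
  | .parR S C, D => .parR S (C.comp D)
  | .copL C S, D => .copL (C.comp D) S
  | .copR S C, D => .copR S (C.comp D)

theorem Ctx.fill_comp (C D : Ctx) (A : St) :
    (C.comp D).fill A = C.fill (D.fill A) := by
  induction C with
  | hole => rfl
  | parL C S ih => simp [Ctx.comp, Ctx.fill, ih]
  | parR S C ih => simp [Ctx.comp, Ctx.fill, ih]
  | copL C S ih => simp [Ctx.comp, Ctx.fill, ih]
  | copR S C ih => simp [Ctx.comp, Ctx.fill, ih]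

theorem SwitchRw.ctx (C : Ctx) {A B : St} (h : SwitchRw A B) :
    SwitchRw (C.fill A) (C.fill B) := by
  obtain ⟨D, P, Q, R, h₁, h₂⟩ := h
  refine ⟨C.comp D, P, Q, R, ?_, ?_⟩
  · rw [Ctx.fill_comp]
    exact h₁.ctx C
  · rw [Ctx.fill_comp]
    exact h₂.ctx C

/-- Switch derivations can be replayed inside any context. -/
theorem Deriv.ctx (C : Ctx) {A B : St} (h : Deriv SwitchRw A B) :
    Deriv SwitchRw (C.fill A) (C.fill B) := by
  induction h with
  | eqv h => exact .eqv (h.ctx C)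
  | step h _ ih => exact .step (h.ctx C) ih

/-- An equivalence can be absorbed at the start of a switch derivation, since
switch steps are taken modulo equivalence. -/
theorem Deriv.of_equiv {A A' B : St} (e : Equiv A A') (h : Deriv SwitchRw A' B) :
    Deriv SwitchRw A B := by
  cases h with
  | eqv h => exact .eqv (e.trans h)
  | step h d =>
    obtain ⟨C, P, Q, R, h₁, h₂⟩ := h
    exact .step ⟨C, P, Q, R, e.trans h₁, h₂⟩ d

theorem SwitchRw.root (P Q R : St) :
    SwitchRw (.par (.cop P Q) R) (.cop P (.par Q R)) :=
  ⟨.hole, P, Q, R, .refl _, .refl _⟩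

/-- The mix rule `[P,Q] → (P,Q)` is the instance of switch whose middle
structure is the unit. -/
theorem Deriv.mix (P Q : St) : Deriv SwitchRw (.par P Q) (.cop P Q) :=
  .step
    ⟨.hole, P, .unit, Q, .parCongr (.symm (.copUnit P)) (.refl Q),
      .copCongr (.refl P) (.trans (.parComm _ _) (.parUnit Q))⟩
    (.eqv (.refl _))

mutual

theorem MergeRel.deriv : ∀ {P Q R : St}, MergeRel P Q R → Deriv SwitchRw (.par P Q) R
  | _, _, _, .par _ _ => .eqv (.refl _)
  | _, _, _, .cop P Q => .mix P Q
  | _, _, _, .left h => MRel.deriv h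
  | _, _, _, .right h => .of_equiv (.parComm _ _) (MRel.deriv h)

theorem MRel.deriv : ∀ {P Q R : St}, MRel P Q R → Deriv SwitchRw (.par P Q) R
  | _, _, _, .parL (S := S) (T := T) (Q := Q) h =>
    .of_equiv (.parAssoc S T Q) ((MergeRel.deriv h).ctx (.parR S .hole))
  | _, _, _, .parR (S := S) (T := T) (Q := Q) h =>
    -- `[[S,T],Q] = [[T,S],Q] = [T,[S,Q]] = [[S,Q],T]`
    .of_equiv
      (.trans (.parCongr (.parComm S T) (.refl Q))
        (.trans (.parAssoc T S Q) (.parComm T (.par S Q))))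
      ((MergeRel.deriv h).ctx (.parL .hole T))
  | _, _, _, .copL (S := S) (T := T) (Q := Q) h =>
    .step (.root S T Q) ((MergeRel.deriv h).ctx (.copR S .hole))
  | _, _, _, .copR (S := S) (T := T) (Q := Q) h =>
    -- `[(S,T),Q] = [(T,S),Q] → (T,[S,Q]) = ([S,Q],T)`
    .of_equiv (.parCongr (.copComm S T) (.refl Q))
      (.step (.root T S Q)
        (.of_equiv (.copComm T (.par S Q)) ((MergeRel.deriv h).ctx (.copL .hole T))))

end

/-- the merge rule is eliminable in the presence of switch.
For all structures `P`, `Q`, `R` with `R ∈ Merge(P,Q)` there is a rewriting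
path `[P,Q] →* R` using only the switch rewrite rule (applied in arbitrary
contexts and modulo the structural equivalence); in particular the merge
rewrite rule `g` never needs to be used. -/
theorem merge_elimination (P Q R : St) (h : MergeRel P Q R) :
    Deriv SwitchRw (.par P Q) R := by
  exact h.deriv

end LBV
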